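/- arXiv:1510.02572 — 6 statements merged into one kernel-verified Lean document; each statement's English description precedes it below -/
import Mathlib

section
/- Suppose that the quadrature nodes and weights satisfy the vanishing-moment condition, that z_j ∉ {λ_1,…,λ_r} for every j = 1,…,N (so that each z_j B − A is nonsingular), and let V ∈ ℂ^{n×L}. Define Ŝ_k := Σ_{j=1}^N ω_j z_j^k (z_j B − A)^{-1} B V and let η := max{n_i : r+1 ≤ i ≤ d} (with η := 1 if r = d). Then for every integer k with 0 ≤ k ≤ N − η one has Ŝ_k = C^k Ŝ_0. -/
noncomputable section
open Matrix

/-- The `n×n` Jordan block with eigenvalue `l`: diagonal entries `l`,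
superdiagonal entries `1`, all other entries `0`. -/
def jordanBlock (n : ℕ) (l : ℂ) : Matrix (Fin n) (Fin n) ℂ :=
  Matrix.of fun p q : Fin n =>
    if (q : ℕ) = (p : ℕ) then l else if (q : ℕ) = (p : ℕ) + 1 then 1 else 0

/-- `C := Q_{1:r} J_{1:r} Q̃_{1:r}ᴴ`, where `Q_{1:r}` consists of the columns of `Q`
belonging to the first `r` (Jordan) blocks, `Q̃_{1:r}ᴴ` of the corresponding rows of
`Q⁻¹`, and `J_{1:r} = J_{n_1}(λ_1) ⊕ ⋯ ⊕ J_{n_r}(λ_r)`. -/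
def Cmat (d : ℕ) (ni : Fin d → ℕ) (r : ℕ) (lam : Fin d → ℂ)
    (Q : Matrix ((i : Fin d) × Fin (ni i)) ((i : Fin d) × Fin (ni i)) ℂ) :
    Matrix ((i : Fin d) × Fin (ni i)) ((i : Fin d) × Fin (ni i)) ℂ :=
  Q.submatrix id (Subtype.val : {x : (i : Fin d) × Fin (ni i) // (x.1 : ℕ) < r} → _) *
    (Matrix.blockDiagonal' (fun i => jordanBlock (ni i) (lam i))).submatrix
      (Subtype.val : {x : (i : Fin d) × Fin (ni i) // (x.1 : ℕ) < r} → _) Subtype.val *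
    (Q⁻¹).submatrix (Subtype.val : {x : (i : Fin d) × Fin (ni i) // (x.1 : ℕ) < r} → _) id

/-- `Ŝ_k := ∑_j ω_j z_j^k (z_j B − A)⁻¹ B V`. -/
def Shat {n : Type*} [Fintype n] [DecidableEq n] {L N : ℕ}
    (z omega : Fin N → ℂ) (A B : Matrix n n ℂ) (V : Matrix n (Fin L) ℂ) (k : ℕ) :
    Matrix n (Fin L) ℂ :=
  ∑ j, (omega j * z j ^ k) • ((z j • B - A)⁻¹ * B * V)

lemma jb_tri (n : ℕ) (l : ℂ) : (jordanBlock n l).BlockTriangular id := by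
  intro p q h
  have h' : (q : ℕ) < (p : ℕ) := h
  simp only [jordanBlock, Matrix.of_apply]
  rw [if_neg (by omega), if_neg (by omega)]

lemma jb_nil (n : ℕ) : jordanBlock n 0 ^ n = 0 := by
  have h := Matrix.aeval_self_charpoly (jordanBlock n 0)
  rw [Matrix.charpoly_of_isUpperTriangular _ (jb_tri n 0)] at h
  simpa [jordanBlock] using h

lemma jb_unit (n : ℕ) (l w : ℂ) (h : w ≠ l) :
    IsUnit (w • (1 : Matrix (Fin n) (Fin n) ℂ) - jordanBlock n l) := by
  rw [Matrix.isUnit_iff_isUnit_det, Matrix.det_of_isUpperTriangular]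
  · simp [jordanBlock, Finset.prod_const, sub_ne_zero.mpr h]
  · apply Matrix.BlockTriangular.sub _ (jb_tri n l)
    intro p q h
    have h' : q < p := h
    simp [Matrix.one_apply_ne h'.ne']

/-- blocks of the inverse of the canonical pencil -/
def Hblk (n : ℕ) (fin : Prop) [Decidable fin] (l w : ℂ) : Matrix (Fin n) (Fin n) ℂ :=
  if fin then (w • (1 : Matrix (Fin n) (Fin n) ℂ) - jordanBlock n l)⁻¹
  else -∑ p ∈ Finset.range n, (w • jordanBlock n 0) ^ p

lemma Hblk_mul (n : ℕ) (fin : Prop) [Decidable fin] (l w : ℂ) (h : fin → w ≠ l) :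
    (w • (if fin then (1 : Matrix (Fin n) (Fin n) ℂ) else jordanBlock n 0) -
      (if fin then jordanBlock n l else 1)) * Hblk n fin l w = 1 := by
  unfold Hblk
  split_ifs with hf
  · exact Matrix.mul_nonsing_inv _ ((Matrix.isUnit_iff_isUnit_det _).mp (jb_unit n l w (h hf)))
  · rw [mul_neg, mul_geom_sum, smul_pow, jb_nil]
    simp

lemma block_step (N : ℕ) (z omega : Fin N → ℂ)
    (hvm : ∀ k : ℕ, k + 2 ≤ N → ∑ j, omega j * z j ^ k = 0)
    (n : ℕ) (fin : Prop) [Decidable fin] (l : ℂ) (h : ∀ j, fin → z j ≠ l)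
    (k : ℕ) (hk : k + 1 ≤ N) (hn : ¬ fin → k + n ≤ N) :
    ∑ j, (omega j * z j ^ k) • (Hblk n fin l (z j) *
        (if fin then (1 : Matrix (Fin n) (Fin n) ℂ) else jordanBlock n 0)) =
      (if fin then jordanBlock n l else 0) ^ k *
      ∑ j, (omega j * z j ^ 0) • (Hblk n fin l (z j) *
        (if fin then (1 : Matrix (Fin n) (Fin n) ℂ) else jordanBlock n 0)) := by
  by_cases hf : fin
  · simp only [hf, if_true, mul_one]
    induction k with
    | zero => simp
    | succ k ih =>
      rw [pow_succ', mul_assoc, ← ih (by omega) (fun h => absurd hf h), Finset.mul_sum]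
      have key : ∀ j, jordanBlock n l * ((omega j * z j ^ k) • Hblk n fin l (z j)) =
          (omega j * z j ^ (k+1)) • Hblk n fin l (z j) - (omega j * z j ^ k) • 1 := by
        intro j
        have := Hblk_mul n fin l (z j) (h j)
        simp only [hf, if_true] at this
        rw [sub_mul, smul_mul_assoc, one_mul] at this
        rw [← this, mul_smul_comm, smul_sub, smul_smul, pow_succ, mul_assoc]
        abel
      rw [Finset.sum_congr rfl (fun j _ => key j), Finset.sum_sub_distrib, ← Finset.sum_smul,
        hvm k (by omega)]
      simp
  · have zero : ∀ m, m + n ≤ N → ∑ j, (omega j * z j ^ m) • (Hblk n fin l (z j) *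
        (if fin then (1 : Matrix (Fin n) (Fin n) ℂ) else jordanBlock n 0)) = 0 := by
      intro m hm
      simp only [Hblk, hf, if_false, neg_mul, smul_neg, Finset.sum_neg_distrib, Finset.sum_mul,
        Finset.smul_sum]
      rw [Finset.sum_comm, neg_eq_zero]
      apply Finset.sum_eq_zero
      intro p hp
      rw [Finset.mem_range] at hp
      simp only [smul_pow, smul_mul_assoc, smul_smul, ← pow_succ]
      rw [← Finset.sum_smul]
      by_cases hpn : p + 1 = n
      · rw [hpn, jb_nil, smul_zero]
      · simp only [mul_assoc, ← pow_add]
        rw [hvm (m + p) (by omega), zero_smul]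
    have := hn hf
    rw [zero k this, zero 0 (by omega), mul_zero]

lemma Cmat_eq (d : ℕ) (ni : Fin d → ℕ) (r : ℕ) (lam : Fin d → ℂ)
    (Q : Matrix ((i : Fin d) × Fin (ni i)) ((i : Fin d) × Fin (ni i)) ℂ) :
    Cmat d ni r lam Q = Q * Matrix.blockDiagonal'
      (fun i : Fin d => if (i : ℕ) < r then jordanBlock (ni i) (lam i) else 0) * Q⁻¹ := by
  have sub : ∀ f : ((i : Fin d) × Fin (ni i)) → ℂ, (∀ x, ¬ (x.1 : ℕ) < r → f x = 0) →
      ∑ x : {x : (i : Fin d) × Fin (ni i) // (x.1 : ℕ) < r}, f x.1 = ∑ x, f x := by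
    intro f hf
    rw [← Finset.sum_subtype (Finset.univ.filter
      (fun x : (i : Fin d) × Fin (ni i) => (x.1 : ℕ) < r)) (by simp) f, Finset.sum_filter]
    refine Finset.sum_congr rfl fun x _ => ?_
    split_ifs with hx
    · rfl
    · exact (hf x hx).symm
  have ent : ∀ x y : (i : Fin d) × Fin (ni i), (x.1 : ℕ) < r →
      Matrix.blockDiagonal' (fun i => jordanBlock (ni i) (lam i)) x y = Matrix.blockDiagonal'
      (fun i : Fin d => if (i : ℕ) < r then jordanBlock (ni i) (lam i) else 0) x y := by
    intro x y hx
    simp only [Matrix.blockDiagonal'_apply, hx, if_true]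
  have ent0 : ∀ x y : (i : Fin d) × Fin (ni i), (¬ (x.1 : ℕ) < r ∨ ¬ (y.1 : ℕ) < r) →
      Matrix.blockDiagonal'
      (fun i : Fin d => if (i : ℕ) < r then jordanBlock (ni i) (lam i) else 0) x y = 0 := by
    intro x y hx
    simp only [Matrix.blockDiagonal'_apply]
    split_ifs with h1 h2
    · rw [h1] at h2 hx
      simp [h2] at hx
    · simp
    · rfl
  ext a b
  change (∑ y : {x : (i : Fin d) × Fin (ni i) // (x.1 : ℕ) < r},
    (∑ x : {x : (i : Fin d) × Fin (ni i) // (x.1 : ℕ) < r},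
      Q a x.1 * Matrix.blockDiagonal' (fun i => jordanBlock (ni i) (lam i)) x.1 y.1) *
        Q⁻¹ y.1 b) = _
  rw [Matrix.mul_apply]
  simp only [Matrix.mul_apply]
  rw [← sub]
  · refine Finset.sum_congr rfl fun y _ => ?_
    rw [← sub]
    · congr 1
      refine Finset.sum_congr rfl fun x _ => ?_
      rw [ent _ _ x.2]
    · intro x hx
      rw [ent0 _ _ (Or.inl hx), mul_zero]
  · intro y hy
    rw [Finset.sum_eq_zero, zero_mul]
    intro x _
    rw [ent0 _ _ (Or.inr hy), mul_zero]

/-- Theorem 8 of the paper: under the Weierstrass canonical form of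
the regular pencil `zB − A` and the vanishing-moment condition, with each `z_j`
different from all finite eigenvalues `λ_1, …, λ_r`, for every
`0 ≤ k ≤ N − η` (where `η = max{n_i : r+1 ≤ i ≤ d}`, `η = 1` if `r = d`) one has
`Ŝ_k = C^k Ŝ_0`. -/
theorem stmt_0 (N : ℕ) (z omega : Fin N → ℂ)
    (hvm : ∀ k : ℕ, k + 2 ≤ N → ∑ j, omega j * z j ^ k = 0)
    (d : ℕ) (ni : Fin d → ℕ) (hni : ∀ i, 1 ≤ ni i) (r : ℕ) (hr : r ≤ d)
    (lam : Fin d → ℂ)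
    (A B Pt Q : Matrix ((i : Fin d) × Fin (ni i)) ((i : Fin d) × Fin (ni i)) ℂ)
    (hPt : IsUnit Pt) (hQ : IsUnit Q)
    (hA : Ptᴴ * A * Q = Matrix.blockDiagonal'
      (fun i : Fin d => if (i : ℕ) < r then jordanBlock (ni i) (lam i) else 1))
    (hB : Ptᴴ * B * Q = Matrix.blockDiagonal'
      (fun i : Fin d => if (i : ℕ) < r then 1 else jordanBlock (ni i) 0))
    (hzlam : ∀ (j : Fin N) (i : Fin d), (i : ℕ) < r → z j ≠ lam i)
    (L : ℕ) (V : Matrix ((i : Fin d) × Fin (ni i)) (Fin L) ℂ)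
    (k : ℕ)
    (hk : k + ((Finset.univ.filter (fun i : Fin d => r ≤ (i : ℕ))).sup ni ⊔ 1) ≤ N) :
    Shat z omega A B V k = Cmat d ni r lam Q ^ k * Shat z omega A B V 0 := by
  classical
  set JA := Matrix.blockDiagonal'
      (fun i : Fin d => if (i : ℕ) < r then jordanBlock (ni i) (lam i) else 1) with hJA
  set JB := Matrix.blockDiagonal'
      (fun i : Fin d => if (i : ℕ) < r then 1 else jordanBlock (ni i) 0) with hJB
  have hQd : IsUnit Q.det := (Matrix.isUnit_iff_isUnit_det _).mp hQ
  let G : Fin N → (i : Fin d) → Matrix (Fin (ni i)) (Fin (ni i)) ℂ := fun j i =>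
    Hblk (ni i) ((i : ℕ) < r) (lam i) (z j) * (if (i : ℕ) < r then 1 else jordanBlock (ni i) 0)
  have hinv : ∀ j, (z j • B - A)⁻¹ * B = Q * Matrix.blockDiagonal' (G j) * Q⁻¹ := by
    intro j
    set H := Matrix.blockDiagonal' (fun i : Fin d =>
      Hblk (ni i) ((i : ℕ) < r) (lam i) (z j)) with hH
    have h1 : (z j • JB - JA) * H = 1 := by
      rw [hJA, hJB, hH, ← Matrix.blockDiagonal'_smul, ← Matrix.blockDiagonal'_sub,
        ← Matrix.blockDiagonal'_mul, ← Matrix.blockDiagonal'_one]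
      congr 1
      funext i
      exact Hblk_mul (ni i) ((i : ℕ) < r) (lam i) (z j) (hzlam j i)
    have h2 : Ptᴴ * ((z j • B - A) * Q * H) = 1 := by
      rw [← h1, ← hA, ← hB]
      simp only [mul_sub, sub_mul, Matrix.mul_assoc, Matrix.mul_smul, Matrix.smul_mul]
    have h3 : (z j • B - A) * (Q * H * Ptᴴ) = 1 := by
      rw [← mul_eq_one_comm.mp h2]
      simp only [Matrix.mul_assoc]
    rw [Matrix.inv_eq_right_inv h3]
    have h4 : Matrix.blockDiagonal' (G j) = H * JB := by
      rw [hH, hJB, ← Matrix.blockDiagonal'_mul]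
    rw [h4, ← hB]
    simp only [Matrix.mul_assoc, Matrix.mul_nonsing_inv _ hQd, Matrix.mul_one]
  have hS : ∀ m, Shat z omega A B V m =
      Q * Matrix.blockDiagonal' (∑ j, (omega j * z j ^ m) • G j) * Q⁻¹ * V := by
    intro m
    have : Matrix.blockDiagonal' (∑ j, (omega j * z j ^ m) • G j) =
        ∑ j, (omega j * z j ^ m) • Matrix.blockDiagonal' (G j) := by
      have := map_sum (Matrix.blockDiagonal'AddMonoidHom (fun i : Fin d => Fin (ni i))
        (fun i : Fin d => Fin (ni i)) ℂ) (fun j => (omega j * z j ^ m) • G j) Finset.univ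
      refine this.trans (Finset.sum_congr rfl fun j _ => ?_)
      exact Matrix.blockDiagonal'_smul _ _
    rw [this, Shat]
    simp only [Matrix.mul_sum, Matrix.sum_mul, Matrix.mul_smul, Matrix.smul_mul, hinv]
  have hC : ∀ m, Cmat d ni r lam Q ^ m = Q * Matrix.blockDiagonal'
      (fun i : Fin d => (if (i : ℕ) < r then jordanBlock (ni i) (lam i) else 0) ^ m) * Q⁻¹ := by
    intro m
    have hp := Matrix.blockDiagonal'_pow
      (fun i : Fin d => (if (i : ℕ) < r then jordanBlock (ni i) (lam i) else 0)) m
    have hp' : Matrix.blockDiagonal'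
      (fun i : Fin d => (if (i : ℕ) < r then jordanBlock (ni i) (lam i) else 0) ^ m) = _ := hp
    rw [hp', Cmat_eq]
    induction m with
    | zero => simp [Matrix.mul_nonsing_inv _ hQd]
    | succ m ih =>
      rw [pow_succ, ih (Matrix.blockDiagonal'_pow _ m) (Matrix.blockDiagonal'_pow _ m), pow_succ]
      simp only [Matrix.mul_assoc, Matrix.nonsing_inv_mul_cancel_left _ _ hQd]
  rw [hC, hS, hS]
  have hfin : Matrix.blockDiagonal' (∑ j, (omega j * z j ^ k) • G j) = Matrix.blockDiagonal'
      (fun i : Fin d => (if (i : ℕ) < r then jordanBlock (ni i) (lam i) else 0) ^ k) *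
      Matrix.blockDiagonal' (∑ j, (omega j * z j ^ 0) • G j) := by
    rw [← Matrix.blockDiagonal'_mul]
    congr 1
    funext i
    simp only [Finset.sum_apply, Pi.smul_apply]
    refine block_step N z omega hvm (ni i) ((i : ℕ) < r) (lam i) (fun j => hzlam j i) k ?_ ?_
    · have := le_sup_right (a := (Finset.univ.filter (fun i : Fin d => r ≤ (i : ℕ))).sup ni)
        (b := 1)
      omega
    · intro hi
      have h1 : ni i ≤ (Finset.univ.filter (fun i : Fin d => r ≤ (i : ℕ))).sup ni :=
        Finset.le_sup (f := ni) (by simpa using hi)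
      have := h1.trans (le_sup_left (b := 1))
      omega
  rw [hfin]
  simp only [Matrix.mul_assoc, Matrix.nonsing_inv_mul_cancel_left _ _ hQd]
end
end

section
/- For every λ ∈ ℂ and every nonzero vector x ∈ ℂ^n, one has A x = λ B x if and only if C x = λ x and x lies in the column space of Q_{1:r}. In particular, the standard eigenvalue problem C x = λ x restricted to eigenvectors in the column space of Q_{1:r} is equivalent to the generalized eigenvalue problem A x = λ B x with finite eigenvalue λ. -/
noncomputable section
open Matrix

theorem aux_nil (n : ℕ) (l : ℂ) (v : Fin n → ℂ)
    (h : v = l • (jordanBlock n 0).mulVec v) : v = 0 := by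
  have key : ∀ m : ℕ, ∀ p : Fin n, n ≤ (p : ℕ) + m → v p = 0 := by
    intro m
    induction m with
    | zero => intro p hp; have := p.2; omega
    | succ m ih =>
      intro p hp
      rw [h]
      simp only [Pi.smul_apply, Matrix.mulVec, dotProduct, smul_eq_mul]
      rw [Finset.sum_eq_zero, mul_zero]
      intro q _
      by_cases hq : (q : ℕ) = (p : ℕ) + 1
      · rw [ih q (by omega), mul_zero]
      · simp [jordanBlock, hq]
  funext p
  exact key n p (by omega)

theorem aux_bd {d : ℕ} {ni : Fin d → ℕ} (M : (i : Fin d) → Matrix (Fin (ni i)) (Fin (ni i)) ℂ)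
    (v : ((i : Fin d) × Fin (ni i)) → ℂ) (i : Fin d) (a : Fin (ni i)) :
    (Matrix.blockDiagonal' M).mulVec v ⟨i, a⟩ = (M i).mulVec (fun b => v ⟨i, b⟩) a := by
  simp only [Matrix.mulVec, dotProduct]
  rw [Fintype.sum_sigma, Finset.sum_eq_single i]
  · simp
  · intro j _ hj
    apply Finset.sum_eq_zero
    intro b _
    rw [Matrix.blockDiagonal'_apply_ne _ _ _ (Ne.symm hj), zero_mul]
  · simp

theorem aux_sub {m k : Type*} [Fintype k] (p : k → Prop) [DecidablePred p]
    (M : Matrix m k ℂ) (w : {x : k // p x} → ℂ) :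
    (M.submatrix id (Subtype.val : {x : k // p x} → k)).mulVec w =
      M.mulVec (fun x => if h : p x then w ⟨x, h⟩ else 0) := by
  funext i
  simp only [Matrix.mulVec, dotProduct, Matrix.submatrix_apply, id]
  rw [← Finset.sum_subset (Finset.subset_univ (Finset.univ.filter p))]
  · rw [Finset.sum_subtype (p := p) _ (by simp)]
    apply Finset.sum_congr rfl
    intro x _
    simp [x.2]
  · intro x _ hx
    have : ¬ p x := by simpa using hx
    simp [this]

/-- Theorem 9 of the paper: under the Weierstrass canonical form of
the regular pencil `zB − A`, for every `λ ∈ ℂ` and every nonzero vector `x`,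
`A x = λ B x` iff `C x = λ x` and `x` lies in the column space of `Q_{1:r}`. -/
theorem stmt_1
    (d : ℕ) (ni : Fin d → ℕ) (hni : ∀ i, 1 ≤ ni i) (r : ℕ) (hr : r ≤ d)
    (lam : Fin d → ℂ)
    (A B Pt Q : Matrix ((i : Fin d) × Fin (ni i)) ((i : Fin d) × Fin (ni i)) ℂ)
    (hPt : IsUnit Pt) (hQ : IsUnit Q)
    (hA : Ptᴴ * A * Q = Matrix.blockDiagonal'
      (fun i : Fin d => if (i : ℕ) < r then jordanBlock (ni i) (lam i) else 1))
    (hB : Ptᴴ * B * Q = Matrix.blockDiagonal'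
      (fun i : Fin d => if (i : ℕ) < r then 1 else jordanBlock (ni i) 0))
    (l : ℂ) (x : ((i : Fin d) × Fin (ni i)) → ℂ) (hx : x ≠ 0) :
    A.mulVec x = l • B.mulVec x ↔
      (Cmat d ni r lam Q).mulVec x = l • x ∧
        x ∈ LinearMap.range (Q.submatrix id
          (Subtype.val : {y : (i : Fin d) × Fin (ni i) // (y.1 : ℕ) < r} → _)).mulVecLin := by
  have hPt' : IsUnit Ptᴴ := (Matrix.isUnit_conjTranspose (A := Pt)).2 hPt
  have hQd : IsUnit Q.det := (Matrix.isUnit_iff_isUnit_det Q).1 hQ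
  have injQ : Function.Injective Q.mulVec := Matrix.mulVec_injective_of_isUnit hQ
  have injP : Function.Injective Ptᴴ.mulVec := Matrix.mulVec_injective_of_isUnit hPt'
  obtain ⟨y, rfl⟩ : ∃ y, x = Q.mulVec y :=
    ⟨Q⁻¹.mulVec x, by rw [Matrix.mulVec_mulVec, Matrix.mul_nonsing_inv _ hQd, Matrix.one_mulVec]⟩
  have hQy : Q⁻¹.mulVec (Q.mulVec y) = y := by
    rw [Matrix.mulVec_mulVec, Matrix.nonsing_inv_mul _ hQd, Matrix.one_mulVec]
  have h1 : A.mulVec (Q.mulVec y) = l • B.mulVec (Q.mulVec y) ↔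
      ∀ (i : Fin d), 
        ((i : ℕ) < r → (jordanBlock (ni i) (lam i)).mulVec (fun b => y ⟨i, b⟩)
          = l • fun b => y ⟨i, b⟩) ∧
        (¬ (i : ℕ) < r → (fun b => y ⟨i, b⟩) = (0 : Fin (ni i) → ℂ)) := by
    rw [← injP.eq_iff, Matrix.mulVec_smul]
    simp only [Matrix.mulVec_mulVec, ← Matrix.mul_assoc]
    rw [hA, hB]
    constructor
    · intro h i
      have h' : ∀ a, _ := fun a => congrFun h ⟨i, a⟩
      simp only [Pi.smul_apply, aux_bd] at h'
      constructor
      · intro hi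
        funext a
        simpa [hi] using h' a
      · intro hi
        apply aux_nil (ni i) l
        funext a
        simpa [hi] using h' a
    · intro h
      funext ⟨i, a⟩
      simp only [Pi.smul_apply, aux_bd]
      by_cases hi : (i : ℕ) < r
      · simpa [hi] using congrFun ((h i).1 hi) a
      · rw [(h i).2 hi]
        simp
  have h2 : Q.mulVec y ∈ LinearMap.range (Q.submatrix id
          (Subtype.val : {y : (i : Fin d) × Fin (ni i) // (y.1 : ℕ) < r} → _)).mulVecLin ↔
      ∀ (i : Fin d), ¬ (i : ℕ) < r → (fun b => y ⟨i, b⟩) = (0 : Fin (ni i) → ℂ) := by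
    simp only [LinearMap.mem_range, Matrix.mulVecLin_apply]
    constructor
    · rintro ⟨w, hw⟩ i hi
      rw [aux_sub (fun y : (i : Fin d) × Fin (ni i) => (y.1 : ℕ) < r)] at hw
      have := injQ hw
      funext b
      rw [← this]
      simp [hi]
    · intro h
      refine ⟨fun k => y k.1, ?_⟩
      rw [aux_sub (fun y : (i : Fin d) × Fin (ni i) => (y.1 : ℕ) < r)]
      congr 1
      funext ⟨i, b⟩
      by_cases hi : (i : ℕ) < r
      · simp [hi]
      · simpa [hi] using (congrFun (h i hi) b).symm
  have h3 : (Cmat d ni r lam Q).mulVec (Q.mulVec y) = Q.mulVec (fun k =>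
      if (k.1 : ℕ) < r then (jordanBlock (ni k.1) (lam k.1)).mulVec (fun b => y ⟨k.1, b⟩) k.2
        else 0) := by
    have e : ((Q⁻¹).submatrix (Subtype.val : {x : (i : Fin d) × Fin (ni i) // (x.1 : ℕ) < r} → _)
        id).mulVec (Q.mulVec y) = fun k => y k.1 := by
      funext k
      exact congrFun hQy k.1
    have e0 : ∀ {k : Type} [Fintype k] (M : Matrix ((i : Fin d) × Fin (ni i)) k ℂ)
        (N : Matrix k k ℂ) (R : Matrix k ((i : Fin d) × Fin (ni i)) ℂ)
        (v : ((i : Fin d) × Fin (ni i)) → ℂ),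
        (Matrix.mulVec (HMul.hMul (self := Matrix.instHMulOfFintypeOfMulOfAddCommMonoid)
          (HMul.hMul (self := Matrix.instHMulOfFintypeOfMulOfAddCommMonoid) M N) R) v) =
          M.mulVec (N.mulVec (R.mulVec v)) := by
      intro k _ M N R v
      rw [← Matrix.mulVec_mulVec, ← Matrix.mulVec_mulVec]
    refine (e0 (Q.submatrix id
        (Subtype.val : {x : (i : Fin d) × Fin (ni i) // (x.1 : ℕ) < r} → _))
      ((Matrix.blockDiagonal' (fun i => jordanBlock (ni i) (lam i))).submatrix
        (Subtype.val : {x : (i : Fin d) × Fin (ni i) // (x.1 : ℕ) < r} → _) Subtype.val)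
      ((Q⁻¹).submatrix (Subtype.val : {x : (i : Fin d) × Fin (ni i) // (x.1 : ℕ) < r} → _) id)
      (Q.mulVec y)).trans ?_
    rw [e,
      aux_sub (fun y : (i : Fin d) × Fin (ni i) => (y.1 : ℕ) < r)]
    congr 1
    funext ⟨i, a⟩
    by_cases hi : (i : ℕ) < r
    · simp only [hi, dif_pos, if_true]
      have e2 := congrFun (aux_sub (fun y : (i : Fin d) × Fin (ni i) => (y.1 : ℕ) < r)
        (Matrix.blockDiagonal' (fun i => jordanBlock (ni i) (lam i))) (fun k => y k.1)) ⟨i, a⟩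
      refine Eq.trans e2 ?_
      rw [aux_bd]
      simp [hi]
    · simp [hi]
  rw [h1, h2, h3, ← Matrix.mulVec_smul, injQ.eq_iff]
  constructor
  · intro h
    refine ⟨?_, fun i => (h i).2⟩
    funext ⟨i, a⟩
    by_cases hi : (i : ℕ) < r
    · simpa [hi] using congrFun ((h i).1 hi) a
    · have := congrFun ((h i).2 hi) a
      simp only [Pi.zero_apply] at this
      simp [hi, this]
  · rintro ⟨h, h'⟩ i
    refine ⟨fun hi => ?_, h' i⟩
    funext a
    simpa [hi] using congrFun h ⟨i, a⟩
end
end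

section
/- Suppose the quadrature nodes and weights satisfy the vanishing-moment condition. Then for every λ ∈ ℂ with λ ≠ 0 and λ ≠ z_j for all j, every integer p ≥ 1, and every integer k with 0 ≤ k ≤ N + p − 2, the identity Σ_{j=1}^N ω_j z_j^k / (z_j − λ)^p = λ^k Σ_{j=1}^N [ω_j / (z_j − λ)^p] · Σ_{q=0}^{p−1} C(k,q) ((z_j − λ)/λ)^q holds, where C(k,q) denotes the binomial coefficient (equal to 0 when q > k). -/
/-- Proposition 2 of the paper: under the vanishing-moment
condition, for `λ ≠ 0` with `λ ≠ z_j` for all `j`, every `p ≥ 1` and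
`0 ≤ k ≤ N + p − 2`,
`∑_j ω_j z_j^k/(z_j−λ)^p = λ^k ∑_j [ω_j/(z_j−λ)^p] ∑_{q=0}^{p−1} C(k,q) ((z_j−λ)/λ)^q`. -/
theorem stmt_2 (N : ℕ) (z omega : Fin N → ℂ)
    (hvm : ∀ k : ℕ, k + 2 ≤ N → ∑ j, omega j * z j ^ k = 0)
    (lam : ℂ) (hlam0 : lam ≠ 0) (hlamz : ∀ j, lam ≠ z j)
    (p : ℕ) (hp : 1 ≤ p) (k : ℕ) (hk : k + 2 ≤ N + p) :
    ∑ j, omega j * z j ^ k / (z j - lam) ^ p =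
      lam ^ k * ∑ j, (omega j / (z j - lam) ^ p) *
        ∑ q ∈ Finset.range p, (k.choose q : ℂ) * ((z j - lam) / lam) ^ q := by
  have hw : ∀ i : ℕ, i + 2 ≤ N → ∑ j, omega j * (z j - lam) ^ i = 0 := by
    intro i hi
    simp_rw [sub_eq_add_neg, add_pow, Finset.mul_sum]
    rw [Finset.sum_comm]
    refine Finset.sum_eq_zero fun m hm => ?_
    have hm' : m + 2 ≤ N := by
      have := Finset.mem_range.mp hm
      omega
    have h := hvm m hm'
    calc ∑ j, omega j * (z j ^ m * (-lam) ^ (i - m) * (i.choose m : ℂ))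
        = (∑ j, omega j * z j ^ m) * ((-lam) ^ (i - m) * (i.choose m : ℂ)) := by
          rw [Finset.sum_mul]
          exact Finset.sum_congr rfl fun j _ => by ring
      _ = 0 := by rw [h, zero_mul]
  have hz : ∀ j, z j ^ k = lam ^ k *
      ∑ q ∈ Finset.range (p + (k + 1)), (k.choose q : ℂ) * ((z j - lam) / lam) ^ q := by
    intro j
    have h1 : z j = lam * ((z j - lam) / lam + 1) := by field_simp; ring
    have h2 : z j ^ k = lam ^ k * ((z j - lam) / lam + 1) ^ k := by
      rw [← mul_pow, ← h1]
    rw [h2, add_pow]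
    congr 1
    rw [← Finset.sum_subset (Finset.range_mono (show k + 1 ≤ p + (k + 1) by omega))]
    · exact Finset.sum_congr rfl fun q _ => by rw [one_pow]; ring
    · intro q _ hq
      have : k < q := by
        rw [Finset.mem_range] at hq
        omega
      rw [Nat.choose_eq_zero_of_lt this]
      simp
  have key : ∀ j, omega j * z j ^ k / (z j - lam) ^ p =
      lam ^ k * ((omega j / (z j - lam) ^ p) *
        ∑ q ∈ Finset.range p, (k.choose q : ℂ) * ((z j - lam) / lam) ^ q) +
      ∑ i ∈ Finset.range (k + 1), (lam ^ k * (k.choose (p + i) : ℂ) / lam ^ (p + i)) *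
        (omega j * (z j - lam) ^ i) := by
    intro j
    have hne : z j - lam ≠ 0 := sub_ne_zero.mpr (hlamz j).symm
    have h3 : ∑ i ∈ Finset.range (k + 1), (lam ^ k * (k.choose (p + i) : ℂ) / lam ^ (p + i)) *
        (omega j * (z j - lam) ^ i) = lam ^ k * ((omega j / (z j - lam) ^ p) *
        ∑ i ∈ Finset.range (k + 1), (k.choose (p + i) : ℂ) * ((z j - lam) / lam) ^ (p + i)) := by
      rw [Finset.mul_sum, Finset.mul_sum]
      refine Finset.sum_congr rfl fun i _ => ?_
      rw [div_pow, pow_add (z j - lam)]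
      field_simp
    rw [h3, hz j, Finset.sum_range_add]
    ring
  rw [Finset.sum_congr rfl fun j _ => key j, Finset.sum_add_distrib, ← Finset.mul_sum,
    Finset.sum_comm, add_eq_left]
  refine Finset.sum_eq_zero fun i _ => ?_
  rw [← Finset.mul_sum]
  by_cases h : p + i ≤ k
  · rw [hw i (by omega), mul_zero]
  · rw [Nat.choose_eq_zero_of_lt (by omega)]
    simp
end

section
/- Suppose the quadrature nodes and weights satisfy the vanishing-moment condition, and let λ ∈ ℂ with λ ≠ z_j for all j. For each integer k ≥ 0 define the row vector f_k(λ) ∈ ℂ^{1×n} by (f_k(λ))_p = Σ_{j=1}^N ω_j z_j^k / (z_j − λ)^p for p = 1,…,n. Then for every integer k with 0 ≤ k ≤ N − 1 one has T_n(f_k(λ)) = (J_n(λ))^k · T_n(f_0(λ)). -/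
noncomputable section
open Matrix

/-- The `n×n` upper triangular Toeplitz matrix `T_n(a)` whose `(p,q)` entry is
`a_{q−p+1}` (1-indexed), i.e. `a (q−p)` (0-indexed) for `q ≥ p`, and `0` otherwise. -/
def toeplitzU (n : ℕ) (a : Fin n → ℂ) : Matrix (Fin n) (Fin n) ℂ :=
  Matrix.of fun p q : Fin n =>
    if (p : ℕ) ≤ (q : ℕ) then a ⟨(q : ℕ) - (p : ℕ), lt_of_le_of_lt (Nat.sub_le _ _) q.isLt⟩
    else 0

theorem jordanBlock_mul_apply (n : ℕ) (l : ℂ) (M : Matrix (Fin n) (Fin n) ℂ) (p q : Fin n) :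
    (jordanBlock n l * M) p q =
      l * M p q + if h : (p : ℕ) + 1 < n then M ⟨(p : ℕ) + 1, h⟩ q else 0 := by
  rw [Matrix.mul_apply]
  have h1 : ∀ r : Fin n, jordanBlock n l p r * M r q =
      (if r = p then l * M r q else 0) + (if (r : ℕ) = (p : ℕ) + 1 then M r q else 0) := by
    intro r
    simp only [jordanBlock, Matrix.of_apply, Fin.ext_iff]
    split_ifs <;> first | omega | simp
  rw [Finset.sum_congr rfl (fun r _ => h1 r), Finset.sum_add_distrib]
  congr 1
  · simp
  · split_ifs with h
    · rw [Finset.sum_eq_single (⟨(p : ℕ) + 1, h⟩ : Fin n)]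
      · simp
      · intro b _ hb
        rw [if_neg]
        intro hh
        exact hb (Fin.ext hh)
      · simp
    · apply Finset.sum_eq_zero
      intro r _
      rw [if_neg]
      have := r.isLt
      omega

theorem toeplitz_step (N n : ℕ) (z omega : Fin N → ℂ)
    (lam : ℂ) (hlam : ∀ j, lam ≠ z j)
    (k : ℕ) (hm : ∑ j, omega j * z j ^ k = 0) :
    toeplitzU n (fun p : Fin n =>
        ∑ j, omega j * z j ^ (k + 1) / (z j - lam) ^ ((p : ℕ) + 1)) =
      jordanBlock n lam *
        toeplitzU n (fun p : Fin n =>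
          ∑ j, omega j * z j ^ k / (z j - lam) ^ ((p : ℕ) + 1)) := by
  have key : ∀ m : ℕ, ∑ j, omega j * z j ^ (k + 1) / (z j - lam) ^ (m + 1) =
      lam * (∑ j, omega j * z j ^ k / (z j - lam) ^ (m + 1)) +
        ∑ j, omega j * z j ^ k / (z j - lam) ^ m := by
    intro m
    rw [Finset.mul_sum, ← Finset.sum_add_distrib]
    refine Finset.sum_congr rfl fun j _ => ?_
    have hj : z j - lam ≠ 0 := sub_ne_zero.mpr (hlam j).symm
    field_simp
    ring
  ext p q
  rw [jordanBlock_mul_apply]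
  simp only [toeplitzU, Matrix.of_apply]
  have hq := q.isLt
  rcases lt_trichotomy (p : ℕ) (q : ℕ) with h | h | h
  · have e : (q : ℕ) - ((p : ℕ) + 1) + 1 = (q : ℕ) - (p : ℕ) := by omega
    rw [if_pos h.le, if_pos h.le, dif_pos (by omega), if_pos (by omega), key, e]
  · have e : (q : ℕ) - (p : ℕ) = 0 := by omega
    have hz : (if h : (p : ℕ) + 1 < n then
        (if (p : ℕ) + 1 ≤ (q : ℕ) then
          ∑ j, omega j * z j ^ k / (z j - lam) ^ ((q : ℕ) - ((p : ℕ) + 1) + 1) else 0)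
        else (0 : ℂ)) = 0 := by
      split_ifs <;> first | omega | rfl
    rw [hz, if_pos h.le, if_pos h.le, key, e]
    simp [hm]
  · rw [if_neg (by omega), if_neg (by omega)]
    split_ifs <;> first | omega | simp

/-- Proposition 3 of the paper: under the vanishing-moment
condition and `λ ≠ z_j` for all `j`, for every `0 ≤ k ≤ N−1` one has
`T_n(f_k(λ)) = (J_n(λ))^k T_n(f_0(λ))`, where
`(f_k(λ))_p = ∑_j ω_j z_j^k/(z_j − λ)^p`. -/
theorem stmt_3 (N n : ℕ) (z omega : Fin N → ℂ)
    (hvm : ∀ k : ℕ, k + 2 ≤ N → ∑ j, omega j * z j ^ k = 0)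
    (lam : ℂ) (hlam : ∀ j, lam ≠ z j)
    (k : ℕ) (hk : k + 1 ≤ N) :
    toeplitzU n (fun p : Fin n =>
        ∑ j, omega j * z j ^ k / (z j - lam) ^ ((p : ℕ) + 1)) =
      jordanBlock n lam ^ k *
        toeplitzU n (fun p : Fin n =>
          ∑ j, omega j * z j ^ 0 / (z j - lam) ^ ((p : ℕ) + 1)) := by
  induction k with
  | zero => simp
  | succ k ih =>
    rw [toeplitz_step N n z omega lam hlam k (hvm k (by omega)), ih (by omega), pow_succ',
      Matrix.mul_assoc]
end
end

section
/- Let Q ∈ ℂ^{n×m} have rank m, let W ∈ ℂ^{m×L} and J ∈ ℂ^{m×m}, and set S_0 := Q W and S_1 := Q J W. Suppose S_0 = U_0 Σ_0 W_0^H where U_0 ∈ ℂ^{n×m} satisfies U_0^H U_0 = I_m, Σ_0 ∈ ℂ^{m×m} is an invertible diagonal matrix, and W_0 ∈ ℂ^{L×m} satisfies W_0^H W_0 = I_m. Then the matrix Z := U_0^H Q ∈ ℂ^{m×m} is invertible and U_0^H S_1 W_0 Σ_0^{-1} = Z J Z^{-1}; in particular U_0^H S_1 W_0 Σ_0^{-1}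 is similar to J. -/
noncomputable section
open Matrix

/-- let `Q ∈ ℂ^{n×m}` have rank `m`, `S₀ := Q W`, `S₁ := Q J W`,
and suppose `S₀ = U₀ Σ₀ W₀ᴴ` with `U₀ᴴU₀ = I`, `Σ₀` invertible diagonal and
`W₀ᴴW₀ = I`. Then `Z := U₀ᴴ Q` is invertible and
`U₀ᴴ S₁ W₀ Σ₀⁻¹ = Z J Z⁻¹`; in particular `U₀ᴴ S₁ W₀ Σ₀⁻¹` is similar to `J`. -/
theorem stmt_6 (n m L : ℕ) (Q : Matrix (Fin n) (Fin m) ℂ) (hQ : Q.rank = m)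
    (W : Matrix (Fin m) (Fin L) ℂ) (J : Matrix (Fin m) (Fin m) ℂ)
    (U0 : Matrix (Fin n) (Fin m) ℂ) (hU0 : U0ᴴ * U0 = 1)
    (sigma : Fin m → ℂ) (hsigma : ∀ i, sigma i ≠ 0)
    (W0 : Matrix (Fin L) (Fin m) ℂ) (hW0 : W0ᴴ * W0 = 1)
    (hSVD : Q * W = U0 * Matrix.diagonal sigma * W0ᴴ) :
    IsUnit (U0ᴴ * Q) ∧
    U0ᴴ * (Q * J * W) * W0 * (Matrix.diagonal sigma)⁻¹ =
      (U0ᴴ * Q) * J * (U0ᴴ * Q)⁻¹ := by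
  have hD : Matrix.diagonal sigma * (Matrix.diagonal sigma)⁻¹ = 1 := by
    apply Matrix.mul_nonsing_inv
    rw [Matrix.det_diagonal, isUnit_iff_ne_zero]
    exact Finset.prod_ne_zero_iff.mpr fun i _ => hsigma i
  have h : (U0ᴴ * Q) * (W * W0 * (Matrix.diagonal sigma)⁻¹) = 1 := by
    calc (U0ᴴ * Q) * (W * W0 * (Matrix.diagonal sigma)⁻¹)
        = U0ᴴ * (Q * W) * W0 * (Matrix.diagonal sigma)⁻¹ := by
          simp only [Matrix.mul_assoc]
      _ = (U0ᴴ * U0) * Matrix.diagonal sigma * (W0ᴴ * W0) * (Matrix.diagonal sigma)⁻¹ := by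
          rw [hSVD]; simp only [Matrix.mul_assoc]
      _ = 1 := by rw [hU0, hW0, Matrix.one_mul, Matrix.mul_one, hD]
  refine ⟨(Matrix.isUnit_iff_isUnit_det _).mpr (Matrix.isUnit_det_of_right_inverse h), ?_⟩
  rw [Matrix.inv_eq_right_inv h]
  simp only [Matrix.mul_assoc]
end
end

section
/- Assume the hypotheses of the Weierstrass canonical form with z_j ∉ {λ_1,…,λ_r} for all j. Define f(λ) := Σ_{j=1}^N ω_j/(z_j − λ), for each i ≤ r the row vector f_0(λ_i) ∈ ℂ^{1×n_i} with (f_0(λ_i))_p = Σ_{j=1}^N ω_j/(z_j − λ_i)^p, F_{1:r} := T_{n_1}(f_0(λ_1)) ⊕ ⋯ ⊕ T_{n_r}(f_0(λ_r)), and the filter operator P̂ := Q_{1:r} F_{1:r} Q̃_{1:r}^H ∈ ℂ^{n×n}. Then every eigenvalue of P̂ lies in the set {0} ∪ {f(λ_1), …, f(λ_r)}. -/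
noncomputable section
open Matrix

/-- The filter operator `P̂ := Q_{1:r} F_{1:r} Q̃_{1:r}ᴴ`, where
`F_{1:r} = T_{n_1}(f_0(λ_1)) ⊕ ⋯ ⊕ T_{n_r}(f_0(λ_r))` and
`(f_0(λ_i))_p = ∑_j ω_j/(z_j − λ_i)^p`. -/
def filterOp (N : ℕ) (z omega : Fin N → ℂ)
    (d : ℕ) (ni : Fin d → ℕ) (r : ℕ) (lam : Fin d → ℂ)
    (Q : Matrix ((i : Fin d) × Fin (ni i)) ((i : Fin d) × Fin (ni i)) ℂ) :
    Matrix ((i : Fin d) × Fin (ni i)) ((i : Fin d) × Fin (ni i)) ℂ :=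
  Q.submatrix id (Subtype.val : {x : (i : Fin d) × Fin (ni i) // (x.1 : ℕ) < r} → _) *
    (Matrix.blockDiagonal' (fun i => toeplitzU (ni i)
      (fun p => ∑ j, omega j / (z j - lam i) ^ ((p : ℕ) + 1)))).submatrix
      (Subtype.val : {x : (i : Fin d) × Fin (ni i) // (x.1 : ℕ) < r} → _) Subtype.val *
    (Q⁻¹).submatrix (Subtype.val : {x : (i : Fin d) × Fin (ni i) // (x.1 : ℕ) < r} → _) id

/-- under the Weierstrass canonical form with `z_j ∉ {λ_1,…,λ_r}`,
every eigenvalue of the filter operator `P̂ = Q_{1:r} F_{1:r} Q̃_{1:r}ᴴ` lies in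
`{0} ∪ {f(λ_1), …, f(λ_r)}`, where `f(λ) = ∑_j ω_j/(z_j − λ)`. -/
theorem stmt_8 (N : ℕ) (z omega : Fin N → ℂ)
    (d : ℕ) (ni : Fin d → ℕ) (hni : ∀ i, 1 ≤ ni i) (r : ℕ) (hr : r ≤ d)
    (lam : Fin d → ℂ)
    (A B Pt Q : Matrix ((i : Fin d) × Fin (ni i)) ((i : Fin d) × Fin (ni i)) ℂ)
    (hPt : IsUnit Pt) (hQ : IsUnit Q)
    (hA : Ptᴴ * A * Q = Matrix.blockDiagonal'
      (fun i : Fin d => if (i : ℕ) < r then jordanBlock (ni i) (lam i) else 1))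
    (hB : Ptᴴ * B * Q = Matrix.blockDiagonal'
      (fun i : Fin d => if (i : ℕ) < r then 1 else jordanBlock (ni i) 0))
    (hzlam : ∀ (j : Fin N) (i : Fin d), (i : ℕ) < r → z j ≠ lam i)
    (mu : ℂ) (hmu : mu ∈ spectrum ℂ (filterOp N z omega d ni r lam Q)) :
    mu = 0 ∨ ∃ i : Fin d, (i : ℕ) < r ∧ mu = ∑ j, omega j / (z j - lam i) := by
  by_cases h0 : mu = 0
  · exact Or.inl h0
  right
  rw [← Matrix.spectrum_toLin', ← Module.End.hasEigenvalue_iff_mem_spectrum] at hmu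
  obtain ⟨v, hv⟩ := hmu.exists_hasEigenvector
  have hv1 := hv.apply_eq_smul
  have hv0 := hv.2
  rw [Matrix.toLin'_apply] at hv1
  unfold filterOp at hv1
  set X := Q.submatrix id
    (Subtype.val : {x : (i : Fin d) × Fin (ni i) // (x.1 : ℕ) < r} → _) with hX
  set Y := (Q⁻¹).submatrix
    (Subtype.val : {x : (i : Fin d) × Fin (ni i) // (x.1 : ℕ) < r} → _) id with hY
  set F := (Matrix.blockDiagonal' (fun i => toeplitzU (ni i)
      (fun p => ∑ j, omega j / (z j - lam i) ^ ((p : ℕ) + 1)))).submatrix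
      (Subtype.val : {x : (i : Fin d) × Fin (ni i) // (x.1 : ℕ) < r} → _) Subtype.val with hF
  have hYX : Y * X = 1 := by
    have h1 : Q⁻¹ * Q = 1 := Matrix.nonsing_inv_mul _ ((Matrix.isUnit_iff_isUnit_det _).1 hQ)
    ext a b
    have h2 := congrFun (congrFun h1 a.1) b.1
    simp only [Matrix.mul_apply, Matrix.one_apply, Subtype.val_inj] at h2
    simp only [Matrix.mul_apply, Matrix.one_apply, hX, hY, Matrix.submatrix_apply, id]
    exact h2
  have hv2 : X *ᵥ (F *ᵥ (Y *ᵥ v)) = mu • v := by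
    rw [Matrix.mulVec_mulVec, Matrix.mulVec_mulVec]
    exact hv1
  have hw : F *ᵥ (Y *ᵥ v) = mu • (Y *ᵥ v) := by
    have h := congrArg (fun u => Y *ᵥ u) hv2
    simp only [Matrix.mulVec_smul] at h
    rw [Matrix.mulVec_mulVec, hYX, Matrix.one_mulVec] at h
    exact h
  have hw0 : Y *ᵥ v ≠ 0 := by
    intro h
    rw [h, Matrix.mulVec_zero, Matrix.mulVec_zero] at hv2
    exact (smul_ne_zero h0 hv0) hv2.symm
  generalize Y *ᵥ v = w at hw hw0
  obtain ⟨x0, hx0⟩ := Function.ne_iff.1 hw0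
  obtain ⟨x, hx, hmax⟩ := Finset.exists_max_image (Finset.univ.filter fun y => w y ≠ 0)
    (fun y => (y.1.2 : ℕ)) ⟨x0, by simpa using hx0⟩
  simp only [Finset.mem_filter, Finset.mem_univ, true_and] at hx hmax
  refine ⟨x.1.1, x.2, ?_⟩
  have hrow := congrFun hw x
  simp only [Matrix.mulVec, dotProduct, Pi.smul_apply, smul_eq_mul] at hrow
  rw [Finset.sum_eq_single x] at hrow
  · have := mul_right_cancel₀ hx hrow
    rw [← this, hF]
    obtain ⟨⟨i, p⟩, hi⟩ := x
    simp [Matrix.blockDiagonal'_apply, toeplitzU]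
  · intro y _ hyx
    by_cases hwy : w y = 0
    · rw [hwy, mul_zero]
    have hle := hmax y hwy
    obtain ⟨⟨i, p⟩, hi⟩ := x
    obtain ⟨⟨k, q⟩, hk⟩ := y
    rw [hF, Matrix.submatrix_apply]
    by_cases hik : i = k
    · subst hik
      have hlt : ¬ (p : ℕ) ≤ (q : ℕ) := by
        intro h
        apply hyx
        have : q = p := Fin.ext (le_antisymm hle h)
        subst this
        rfl
      rw [Matrix.blockDiagonal'_apply_eq]
      simp only [toeplitzU, Matrix.of_apply, if_neg hlt, zero_mul]
    · rw [Matrix.blockDiagonal'_apply_ne _ _ _ hik, zero_mul]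
  · intro h
    exact absurd (Finset.mem_univ x) h
end
end
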